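/- Let g : ℝ^p → ℝ^m be continuously differentiable on a convex set Θ with Jacobian G, Lipschitz with constant L, W symmetric positive definite, and θ̂ ∈ Θ with G(θ̂)ᵀ W g(θ̂) = 0. Then for any θ ∈ Θ: |[g(θ) − g(θ̂)]ᵀ W g(θ̂)| ≤ √(λ_max(W)) · L · ‖g(θ̂)‖_W · ‖θ − θ̂‖². -/

import Mathlib

open Matrix Set MeasureTheory
open scoped BigOperators

noncomputable section

/-- Euclidean norm of a vector in `Fin n → ℝ`. -/
def enorm' {n : ℕ} (v : Fin n → ℝ) : ℝ := Real.sqrt (∑ i, v i ^ 2)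

/-- Smallest singular value of a matrix. -/
def sigMin {m p : ℕ} (A : Matrix (Fin m) (Fin p) ℝ) : ℝ :=
  sInf {c : ℝ | ∃ v : Fin p → ℝ, enorm' v = 1 ∧ c = enorm' (A *ᵥ v)}

/-- Largest singular value of a matrix (operator norm). -/
def sigMax {m p : ℕ} (A : Matrix (Fin m) (Fin p) ℝ) : ℝ :=
  sSup {c : ℝ | ∃ v : Fin p → ℝ, enorm' v = 1 ∧ c = enorm' (A *ᵥ v)}

/-- Smallest eigenvalue of a (symmetric) square matrix, via the Rayleigh quotient. -/
def lamMin {n : ℕ} (A : Matrix (Fin n) (Fin n) ℝ) : ℝ :=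
  sInf {c : ℝ | ∃ v : Fin n → ℝ, enorm' v = 1 ∧ c = v ⬝ᵥ (A *ᵥ v)}

/-- Largest eigenvalue of a (symmetric) square matrix, via the Rayleigh quotient. -/
def lamMax {n : ℕ} (A : Matrix (Fin n) (Fin n) ℝ) : ℝ :=
  sSup {c : ℝ | ∃ v : Fin n → ℝ, enorm' v = 1 ∧ c = v ⬝ᵥ (A *ᵥ v)}

/-- Weighted norm `‖v‖_W = √(vᵀ W v)`. -/
def wnorm {m : ℕ} (W : Matrix (Fin m) (Fin m) ℝ) (v : Fin m → ℝ) : ℝ :=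
  Real.sqrt (v ⬝ᵥ (W *ᵥ v))

/-- A matrix viewed as a continuous linear map `ℝ^p → ℝ^m`. -/
def toCLM {m p : ℕ} (A : Matrix (Fin m) (Fin p) ℝ) : (Fin p → ℝ) →L[ℝ] (Fin m → ℝ) :=
  LinearMap.toContinuousLinearMap A.mulVecLin

/-!
Since `(G θ̂)ᵀ W g(θ̂) = 0`, the function `θ ↦ g(θ)ᵀ W g(θ̂)` has derivative zero at `θ̂`, and its
derivative at `θ̂ + t (θ - θ̂)` in the direction `θ - θ̂` is
`[(G(θ̂ + t (θ - θ̂)) - G(θ̂)) (θ - θ̂)]ᵀ W g(θ̂)`. By the Cauchy–Schwarz inequality for `W` and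
the Lipschitz bound this is at most `t · √λ_max(W) · L · ‖g(θ̂)‖_W · ‖θ - θ̂‖²` in absolute value.
Integrating over `t ∈ [0, 1]` gives the estimate, even with the constant `L / 2`.
-/

section NormedSpace

variable {E F : Type*} [NormedAddCommGroup E] [NormedSpace ℝ E]
  [NormedAddCommGroup F] [NormedSpace ℝ F]

/- The bound concerns only the direction `y - x`, so that it can be checked in a norm on `E` other
than the ambient one. -/
lemma norm_image_sub_sub_le_half_of_norm_fderiv_sub_le_mul {f : E → F} {f' : E → E →L[ℝ] F}
    {s : Set E} {x y : E} {C : ℝ} (hs : StarConvex ℝ x s) (hy : y ∈ s)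
    (hf : ∀ z ∈ s, HasFDerivWithinAt f (f' z) s z)
    (hbound : ∀ t ∈ Ico (0 : ℝ) 1, ‖(f' (x + t • (y - x)) - f' x) (y - x)‖ ≤ C * t) :
    ‖f y - f x - f' x (y - x)‖ ≤ C / 2 := by
  have hmem : MapsTo (fun t : ℝ ↦ x + t • (y - x)) (Icc 0 1) s :=
    fun t ht ↦ hs.add_smul_sub_mem hy ht.1 ht.2
  have hline (t : ℝ) : HasDerivAt (fun t : ℝ ↦ x + t • (y - x)) (y - x) t := by
    simpa using ((hasDerivAt_id t).smul_const (y - x)).const_add x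
  have hremainder : ∀ t ∈ Icc (0 : ℝ) 1,
      HasDerivWithinAt (fun t : ℝ ↦ f (x + t • (y - x)) - f x - t • f' x (y - x))
        ((f' (x + t • (y - x)) - f' x) (y - x)) (Icc 0 1) t := by
    intro t ht
    have hcomp := (hf _ (hmem ht)).comp_hasDerivWithinAt t (hline t).hasDerivWithinAt hmem
    have hlin := ((hasDerivAt_id t).smul_const (f' x (y - x))).hasDerivWithinAt (s := Icc 0 1)
    simpa using! (hcomp.sub_const (f x)).sub hlin
  have hmajorant (t : ℝ) : HasDerivAt (fun t : ℝ ↦ C / 2 * t ^ 2) (C * t) t := by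
    convert! (hasDerivAt_pow 2 t).const_mul (C / 2) using 1
    simp only [Nat.cast_ofNat, Nat.add_one_sub_one, pow_one]
    ring
  simpa using image_norm_le_of_norm_deriv_right_le_deriv_boundary
    (fun t ht ↦ (hremainder t ht).continuousWithinAt)
    (fun t ht ↦ (hremainder t (Ico_subset_Icc_self ht)).mono_of_mem_nhdsWithin
      (Icc_mem_nhdsGE_of_mem ht))
    (by simp) hmajorant hbound (right_mem_Icc.2 zero_le_one)

lemma le_sSup_image_sphere_mul_norm_pow {f : E → ℝ} {k : ℕ} (hk : k ≠ 0)
    (hf : ∀ (c : ℝ) (v : E), 0 ≤ c → f (c • v) = c ^ k * f v)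
    (hbdd : BddAbove (f '' Metric.sphere 0 1)) (v : E) :
    f v ≤ sSup (f '' Metric.sphere 0 1) * ‖v‖ ^ k := by
  rcases eq_or_ne v 0 with rfl | hv
  · have hf0 : f 0 = 0 := by simpa [hk] using hf 0 0 le_rfl
    simp [hf0, hk]
  · have hunit : ‖v‖⁻¹ • v ∈ Metric.sphere (0 : E) 1 := by
      simp [norm_smul, norm_ne_zero_iff.2 hv]
    calc f v = f (‖v‖⁻¹ • v) * ‖v‖ ^ k := by
          rw [mul_comm, ← hf _ _ (norm_nonneg v), smul_inv_smul₀ (norm_ne_zero_iff.2 hv)]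
      _ ≤ sSup (f '' Metric.sphere 0 1) * ‖v‖ ^ k := by
          gcongr
          exact le_csSup hbdd (mem_image_of_mem f hunit)

end NormedSpace

section Enorm

variable {n : ℕ}

lemma enorm'_eq_norm_toLp (v : Fin n → ℝ) : enorm' v = ‖WithLp.toLp 2 v‖ := by
  simp [enorm', EuclideanSpace.norm_eq]

lemma enorm'_nonneg (v : Fin n → ℝ) : 0 ≤ enorm' v := Real.sqrt_nonneg _

lemma enorm'_smul (c : ℝ) (v : Fin n → ℝ) : enorm' (c • v) = |c| * enorm' v := by
  simp only [enorm'_eq_norm_toLp, WithLp.toLp_smul, norm_smul, Real.norm_eq_abs]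

lemma continuous_enorm' : Continuous (enorm' : (Fin n → ℝ) → ℝ) := by
  unfold enorm'
  fun_prop

lemma setOf_enorm'_eq_one_eq_image_sphere (f : (Fin n → ℝ) → ℝ) :
    {c : ℝ | ∃ v, enorm' v = 1 ∧ c = f v} =
      (fun v : EuclideanSpace ℝ (Fin n) ↦ f v.ofLp) '' Metric.sphere 0 1 := by
  ext c
  constructor
  · rintro ⟨v, hv, rfl⟩
    exact ⟨WithLp.toLp 2 v, by simpa [enorm'_eq_norm_toLp] using hv, rfl⟩
  · rintro ⟨v, hv, rfl⟩
    exact ⟨v.ofLp, by simpa [enorm'_eq_norm_toLp] using hv, rfl⟩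

lemma le_sSup_enorm'_eq_one_mul_enorm'_pow {f : (Fin n → ℝ) → ℝ} {k : ℕ} (hk : k ≠ 0)
    (hf : ∀ (c : ℝ) (v : Fin n → ℝ), 0 ≤ c → f (c • v) = c ^ k * f v) (hcont : Continuous f)
    (v : Fin n → ℝ) :
    f v ≤ sSup {c : ℝ | ∃ v, enorm' v = 1 ∧ c = f v} * enorm' v ^ k := by
  rw [setOf_enorm'_eq_one_eq_image_sphere, enorm'_eq_norm_toLp]
  exact le_sSup_image_sphere_mul_norm_pow (f := fun v : EuclideanSpace ℝ (Fin n) ↦ f v.ofLp) hk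
    (fun c v hc ↦ hf c v.ofLp hc)
    ((isCompact_sphere 0 1).bddAbove_image (by fun_prop)) (WithLp.toLp 2 v)

lemma enorm'_mulVec_le_sigMax_mul {m : ℕ} (A : Matrix (Fin m) (Fin n) ℝ) (v : Fin n → ℝ) :
    enorm' (A *ᵥ v) ≤ sigMax A * enorm' v := by
  simpa only [sigMax, pow_one] using
    le_sSup_enorm'_eq_one_mul_enorm'_pow (f := fun v ↦ enorm' (A *ᵥ v)) one_ne_zero
      (fun c v hc ↦ by rw [mulVec_smul, enorm'_smul, abs_of_nonneg hc, pow_one])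
      (continuous_enorm'.comp (by fun_prop)) v

lemma dotProduct_mulVec_self_le_lamMax_mul (A : Matrix (Fin n) (Fin n) ℝ) (v : Fin n → ℝ) :
    v ⬝ᵥ (A *ᵥ v) ≤ lamMax A * enorm' v ^ 2 :=
  le_sSup_enorm'_eq_one_mul_enorm'_pow (f := fun v ↦ v ⬝ᵥ (A *ᵥ v)) two_ne_zero
    (fun c v _ ↦ by simp only [mulVec_smul, smul_dotProduct, dotProduct_smul, smul_eq_mul]; ring)
    (by fun_prop) v

end Enorm

section Wnorm

variable {m : ℕ} {W : Matrix (Fin m) (Fin m) ℝ}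

lemma wnorm_nonneg (W : Matrix (Fin m) (Fin m) ℝ) (v : Fin m → ℝ) : 0 ≤ wnorm W v :=
  Real.sqrt_nonneg _

lemma wnorm_le_sqrt_lamMax_mul_enorm' (W : Matrix (Fin m) (Fin m) ℝ) (v : Fin m → ℝ) :
    wnorm W v ≤ √(lamMax W) * enorm' v :=
  calc wnorm W v ≤ √(lamMax W * enorm' v ^ 2) :=
        Real.sqrt_le_sqrt (dotProduct_mulVec_self_le_lamMax_mul W v)
    _ = √(lamMax W) * enorm' v := by
        rw [Real.sqrt_mul' _ (sq_nonneg _), Real.sqrt_sq (enorm'_nonneg v)]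

lemma abs_dotProduct_mulVec_le_wnorm_mul_wnorm (hW : W.PosSemidef) (u v : Fin m → ℝ) :
    |u ⬝ᵥ (W *ᵥ v)| ≤ wnorm W u * wnorm W v := by
  have hnonneg (x : Fin m → ℝ) : 0 ≤ W.toBilin' x x := by
    simpa [Matrix.toBilin'_apply'] using hW.dotProduct_mulVec_nonneg x
  have hsymm : W.toBilin'.IsSymm :=
    Matrix.isSymm_toBilin'_iff_isSymm.2 (by simpa using hW.isHermitian)
  have hcs := LinearMap.BilinForm.apply_sq_le_of_symm W.toBilin' hnonneg ⟨hsymm.eq⟩ u v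
  simp only [Matrix.toBilin'_apply'] at hnonneg hcs
  rw [wnorm, wnorm, ← Real.sqrt_mul (hnonneg u)]
  exact Real.abs_le_sqrt hcs

lemma abs_mulVec_dotProduct_mulVec_le {n : ℕ} (hW : W.PosSemidef)
    (A : Matrix (Fin m) (Fin n) ℝ) (d : Fin n → ℝ) (v : Fin m → ℝ) :
    |(A *ᵥ d) ⬝ᵥ (W *ᵥ v)| ≤ √(lamMax W) * (sigMax A * enorm' d) * wnorm W v := by
  refine (abs_dotProduct_mulVec_le_wnorm_mul_wnorm hW _ _).trans ?_
  gcongr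
  · exact wnorm_nonneg W v
  · refine (wnorm_le_sqrt_lamMax_mul_enorm' W _).trans ?_
    gcongr
    exact enorm'_mulVec_le_sigMax_mul A d

end Wnorm

lemma mulVec_dotProduct_eq_zero_of_transpose_mulVec_eq_zero {R m n : Type*} [CommSemiring R]
    [Fintype m] [Fintype n] {A : Matrix m n R} {u : m → R} (h : Aᵀ *ᵥ u = 0) (d : n → R) :
    (A *ᵥ d) ⬝ᵥ u = 0 := by
  rw [dotProduct_comm, dotProduct_mulVec, ← mulVec_transpose, h, zero_dotProduct]

/-- The continuous linear functional `v ↦ vᵀ u` on `ℝ^m`. Composing `g` with it at `u = W g(θ̂)`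
reduces the cross term to a scalar function, so that no norm on `ℝ^m` has to be chosen. -/
def dotProductCLM {m : ℕ} (u : Fin m → ℝ) : (Fin m → ℝ) →L[ℝ] ℝ :=
  LinearMap.toContinuousLinearMap ((dotProductBilin ℝ ℝ).flip u)

lemma dotProductCLM_apply {m : ℕ} (u v : Fin m → ℝ) : dotProductCLM u v = v ⬝ᵥ u := rfl

theorem cross_term_bound_general
    {p m : ℕ} {Θ : Set (Fin p → ℝ)} {g : (Fin p → ℝ) → (Fin m → ℝ)}
    {G : (Fin p → ℝ) → Matrix (Fin m) (Fin p) ℝ} {W : Matrix (Fin m) (Fin m) ℝ}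
    {θhat : Fin p → ℝ} {L : ℝ}
    (hΘ : StarConvex ℝ θhat Θ)
    (hG : ∀ θ ∈ Θ, HasFDerivWithinAt g (toCLM (G θ)) Θ θ)
    (hLip : ∀ θ ∈ Θ, sigMax (G θ - G θhat) ≤ L * enorm' (θ - θhat))
    (hW : W.PosSemidef)
    (hfoc : (G θhat)ᵀ *ᵥ (W *ᵥ g θhat) = 0) {θ : Fin p → ℝ} (hθ : θ ∈ Θ) :
    |(g θ - g θhat) ⬝ᵥ (W *ᵥ g θhat)|
      ≤ √(lamMax W) * L * wnorm W (g θhat) * enorm' (θ - θhat) ^ 2 / 2 := by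
  set d := θ - θhat with hd
  set φ := dotProductCLM (W *ᵥ g θhat)
  have hzero : φ (toCLM (G θhat) d) = 0 :=
    mulVec_dotProduct_eq_zero_of_transpose_mulVec_eq_zero hfoc d
  have hbound : ∀ t ∈ Ico (0 : ℝ) 1,
      ‖(φ ∘L toCLM (G (θhat + t • d)) - φ ∘L toCLM (G θhat)) d‖
        ≤ √(lamMax W) * L * wnorm W (g θhat) * enorm' d ^ 2 * t := by
    intro t ht
    have hsig : sigMax (G (θhat + t • d) - G θhat) ≤ L * (t * enorm' d) := by
      simpa only [add_sub_cancel_left, enorm'_smul, abs_of_nonneg ht.1] using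
        hLip _ (hΘ.add_smul_sub_mem hθ ht.1 ht.2.le)
    calc ‖(φ ∘L toCLM (G (θhat + t • d)) - φ ∘L toCLM (G θhat)) d‖
        = |((G (θhat + t • d) - G θhat) *ᵥ d) ⬝ᵥ (W *ᵥ g θhat)| := by
          rw [sub_mulVec, sub_dotProduct]; rfl
      _ ≤ √(lamMax W) * (sigMax (G (θhat + t • d) - G θhat) * enorm' d) * wnorm W (g θhat) :=
          abs_mulVec_dotProduct_mulVec_le hW _ _ _
      _ ≤ √(lamMax W) * (L * (t * enorm' d) * enorm' d) * wnorm W (g θhat) := by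
          gcongr
          exacts [wnorm_nonneg W _, enorm'_nonneg d]
      _ = √(lamMax W) * L * wnorm W (g θhat) * enorm' d ^ 2 * t := by ring
  have htaylor := norm_image_sub_sub_le_half_of_norm_fderiv_sub_le_mul hΘ hθ
    (fun z hz ↦ φ.hasFDerivAt.comp_hasFDerivWithinAt z (hG z hz)) hbound
  rwa [← hd, ContinuousLinearMap.comp_apply, hzero, sub_zero, Function.comp_apply,
    Function.comp_apply, ← map_sub, dotProductCLM_apply, Real.norm_eq_abs] at htaylor

/-- Cross-term bound from the first-order condition and Lipschitz continuity
of the Jacobian. -/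
theorem cross_term_bound
    {p m : ℕ} (Θ : Set (Fin p → ℝ))
    (g : (Fin p → ℝ) → (Fin m → ℝ))
    (G : (Fin p → ℝ) → Matrix (Fin m) (Fin p) ℝ)
    (W : Matrix (Fin m) (Fin m) ℝ)
    (θhat : Fin p → ℝ) (L : ℝ)
    (hΘconv : Convex ℝ Θ)
    (hg : ContDiffOn ℝ 1 g Θ)
    (hG : ∀ θ ∈ Θ, HasFDerivWithinAt g (toCLM (G θ)) Θ θ)
    (hL : 0 ≤ L)
    (hLip : ∀ θ₁ ∈ Θ, ∀ θ₂ ∈ Θ, sigMax (G θ₁ - G θ₂) ≤ L * enorm' (θ₁ - θ₂))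
    (hW : W.PosDef)
    (hθhat : θhat ∈ Θ)
    (hfoc : (G θhat)ᵀ *ᵥ (W *ᵥ g θhat) = 0) :
    ∀ θ ∈ Θ,
      |(g θ - g θhat) ⬝ᵥ (W *ᵥ g θhat)|
        ≤ Real.sqrt (lamMax W) * L * wnorm W (g θhat) * enorm' (θ - θhat) ^ 2 := by
  intro θ hθ
  refine (cross_term_bound_general (hΘconv.starConvex hθhat) hG (fun θ hθ ↦ hLip θ hθ θhat hθhat)
    hW.posSemidef hfoc hθ).trans (half_le_self ?_)
  have := wnorm_nonneg W (g θhat)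
  positivity
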